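/- Let Λ be a unimodular lattice in ℝ^d (d ≥ 2) and Λ* its dual. Then ω(Λ) = 0 if and only if ω(Λ*) = 0. Moreover, for every real γ > 0, if ω(Λ*) ≥ γ then ω(Λ) ≥ γ/((d−1)²(1+γ) − γ); in particular, if ω(Λ) and ω(Λ*) are both finite and nonzero, then 1 + ω(Λ)^{−1} ≤ (d−1)²(1 + ω(Λ*)^{−1}). -/

import Mathlib

open Filter

noncomputable section

/-- A unimodular lattice in `ℝ^d`: the set of integer linear combinations of a basis of `ℝ^d`
whose matrix has determinant `±1`. -/
def IsUnimodularLattice (d : ℕ) (Λ : Set (Fin d → ℝ)) : Prop :=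
  ∃ B : Matrix (Fin d) (Fin d) ℝ, |B.det| = 1 ∧
    Λ = {v | ∃ x : Fin d → ℤ, v = B.mulVec fun i => (x i : ℝ)}

/-- The dual lattice `Λ* = {w : ⟨w, z⟩ ∈ ℤ for all z ∈ Λ}`. -/
def dualLattice (d : ℕ) (Λ : Set (Fin d → ℝ)) : Set (Fin d → ℝ) :=
  {w | ∀ z ∈ Λ, ∃ c : ℤ, ∑ i, w i * z i = (c : ℝ)}

/-- `Π(z) = ∏ i, |z_i|^(1/d)`. -/
def PiProd (d : ℕ) (z : Fin d → ℝ) : ℝ := ∏ i, |z i| ^ ((1 : ℝ) / d)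

/-- The supremum norm `|z| = max_i |z_i|`. -/
def supNorm {d : ℕ} (z : Fin d → ℝ) : ℝ := ⨆ i, |z i|

/-- The Diophantine exponent of a lattice:
`ω(Λ) = sup {γ ∈ ℝ : Π(z) ≤ |z|^(−γ) for infinitely many z ∈ Λ}`, a supremum in `[−∞, +∞]`. -/
def omegaLat (d : ℕ) (Λ : Set (Fin d → ℝ)) : EReal :=
  sSup (Real.toEReal '' {γ : ℝ | {z ∈ Λ | PiProd d z ≤ supNorm z ^ (-γ)}.Infinite})


/-! Fix `w` in the dual lattice `Λ*` with `M = |w|` large and `Π(w) ≤ M ^ (-γ)`, and enlarge the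
`|wᵢ|` to numbers `lᵢ ≤ M` with product exactly `P = M ^ (-γ d)`.
Apply Minkowski's theorem to the box `|zᵢ| < s / lᵢ`, `i ≠ k`, where `|wₖ| = M`, with the linear
form `z ↦ ⟨w, z⟩` in place of the `k`-th coordinate. This form is integral on `Λ`, so making it
smaller than `1` makes it vanish, and orthogonality to `w` then bounds the missing coordinate:
`|zₖ| ≤ d s / lₖ`. Minkowski's theorem permits `s ^ (d - 1) ≍ P`, whence
`Π(z) ≪ M ^ (-γ / (d - 1))` and `|z| ≪ M ^ E` with `(d - 1) E = (d - 1) ^ 2 (1 + γ) - γ`.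
There are infinitely many such `z`, because `|zₖ| ≪ 1 / M` tends to `0`. -/

open Matrix Topology

section Exponent

variable {d : ℕ}

lemma supNorm_eq_norm (z : Fin d → ℝ) : supNorm z = ‖z‖ :=
  le_antisymm (Real.iSup_le (norm_le_pi_norm z) (norm_nonneg z)) <|
    (pi_norm_le_iff_of_nonneg (Real.iSup_nonneg fun _ => abs_nonneg _)).2
      (le_ciSup (Set.finite_range fun i => |z i|).bddAbove)

lemma piProd_le_iff (hd : d ≠ 0) {x : ℝ} (hx : 0 ≤ x) (z : Fin d → ℝ) :
    PiProd d z ≤ x ↔ ∏ i, |z i| ≤ x ^ d := by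
  rw [PiProd, Real.finsetProd_rpow _ _ fun _ _ => abs_nonneg _, one_div,
    Real.rpow_inv_le_iff_of_pos (Finset.prod_nonneg fun _ _ => abs_nonneg _) hx (by positivity),
    Real.rpow_natCast]

lemma eventually_const_mul_rpow_le_rpow {a b : ℝ} (hab : a < b) (C : ℝ) :
    ∀ᶠ t : ℝ in atTop, C * t ^ a ≤ t ^ b := by
  filter_upwards [(tendsto_rpow_atTop (sub_pos.2 hab)).eventually_ge_atTop C,
    eventually_gt_atTop 0] with t hC ht
  calc C * t ^ a ≤ t ^ (b - a) * t ^ a := by gcongr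
    _ = t ^ b := by rw [← Real.rpow_add ht, sub_add_cancel]

lemma finite_setOf_mem_norm_le {E : Type*} [NormedAddCommGroup E] [ProperSpace E]
    (L : Submodule ℤ E) [DiscreteTopology L] (R : ℝ) : {z ∈ (L : Set E) | ‖z‖ ≤ R}.Finite := by
  have : DiscreteTopology L.toAddSubgroup := inferInstanceAs (DiscreteTopology L)
  have hclosed : IsClosed (L : Set E) := AddSubgroup.isClosed_of_discrete (H := L.toAddSubgroup)
  have hfin : (Metric.closedBall 0 R ∩ (L : Set E)).Finite :=
    Metric.finite_isBounded_inter_isClosed DiscreteTopology.isDiscrete Metric.isBounded_closedBall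
      hclosed
  exact hfin.subset fun z hz => ⟨mem_closedBall_zero_iff.2 hz.2, hz.1⟩

lemma exists_pos_forall_abs_lt_imp_lt_norm {ι : Type*} [Fintype ι] (L : Submodule ℤ (ι → ℝ))
    [DiscreteTopology L] (hL : ∀ z ∈ L, z ≠ 0 → ∀ i, z i ≠ 0) (R : ℝ) :
    ∃ ε > 0, ∀ z ∈ L, z ≠ 0 → ∀ i, |z i| < ε → R < ‖z‖ := by
  have hev : ∀ᶠ ε : ℝ in 𝓝[>] 0, ∀ z ∈ {z ∈ (L : Set (ι → ℝ)) | ‖z‖ ≤ R},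
      z ≠ 0 → ∀ i, ε < |z i| := by
    refine (eventually_all_finite (finite_setOf_mem_norm_le L R)).2 fun z hz => ?_
    refine eventually_imp_distrib_left.2 fun hz0 => eventually_all.2 fun i => ?_
    exact eventually_nhdsWithin_of_eventually_nhds
      (eventually_lt_nhds (abs_pos.2 (hL z hz.1 hz0 i)))
  obtain ⟨ε, hε, hε0⟩ := (hev.and self_mem_nhdsWithin).exists
  refine ⟨ε, hε0, fun z hz hz0 i hi => lt_of_not_ge fun hR => ?_⟩
  exact hi.not_gt (hε z ⟨hz, hR⟩ hz0 i)

lemma infinite_setOf_piProd_le_of_apply_eq_zero {L : Submodule ℤ (Fin d → ℝ)} {z : Fin d → ℝ}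
    (hz : z ∈ L) (hz0 : z ≠ 0) {i : Fin d} (hi : z i = 0) (γ : ℝ) :
    {z ∈ (L : Set (Fin d → ℝ)) | PiProd d z ≤ supNorm z ^ (-γ)}.Infinite := by
  refine Set.infinite_of_injective_forall_mem (smul_left_injective ℤ hz0) fun n => ?_
  refine ⟨L.smul_mem n hz, (piProd_le_iff i.pos.ne' ?_ _).2 ?_⟩
  · rw [supNorm_eq_norm]; positivity
  · rw [Finset.prod_eq_zero (Finset.mem_univ i) (by simp [hi]), supNorm_eq_norm]; positivity

-- A ball holds finitely many lattice points, so those with a coordinate tending to `0` are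
-- unbounded, unless one of them has a coordinate `0`, and then all its multiples satisfy `Π = 0`.
lemma le_omegaLat_of_forall_exists_abs_lt {L : Submodule ℤ (Fin d → ℝ)} [DiscreteTopology L]
    {γ : ℝ} (C : ℝ)
    (h : ∀ ε > 0, ∃ z ∈ L, z ≠ 0 ∧ (∃ i, |z i| < ε) ∧ PiProd d z ≤ C * ‖z‖ ^ (-γ)) :
    (γ : EReal) ≤ omegaLat d L := by
  refine EReal.ge_of_forall_gt_iff_ge.1 fun x hx => le_sSup ⟨x, ?_, rfl⟩
  by_cases hL : ∀ z ∈ L, z ≠ 0 → ∀ i, z i ≠ 0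
  · intro hfin
    obtain ⟨R₁, hR₁⟩ := isBounded_iff_forall_norm_le.1 hfin.isBounded
    obtain ⟨R₂, hR₂⟩ := eventually_atTop.1 <|
      eventually_const_mul_rpow_le_rpow (neg_lt_neg (EReal.coe_lt_coe_iff.1 hx)) C
    obtain ⟨ε, hε, hLε⟩ := exists_pos_forall_abs_lt_imp_lt_norm L hL (max R₁ R₂)
    obtain ⟨z, hz, hz0, ⟨i, hi⟩, hPi⟩ := h ε hε
    obtain ⟨hlt₁, hlt₂⟩ := max_lt_iff.1 (hLε z hz hz0 i hi)
    refine hlt₁.not_ge (hR₁ z ⟨hz, ?_⟩)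
    rw [supNorm_eq_norm]
    exact hPi.trans (hR₂ _ hlt₂.le)
  · push Not at hL
    obtain ⟨z, hz, hz0, i, hi⟩ := hL
    exact infinite_setOf_piProd_le_of_apply_eq_zero hz hz0 hi x

lemma exists_mem_piProd_le_lt_norm_of_infinite {L : Submodule ℤ (Fin d → ℝ)} [DiscreteTopology L]
    {γ : ℝ} (h : {z ∈ (L : Set (Fin d → ℝ)) | PiProd d z ≤ supNorm z ^ (-γ)}.Infinite) (R : ℝ) :
    ∃ z ∈ L, PiProd d z ≤ ‖z‖ ^ (-γ) ∧ R < ‖z‖ := by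
  by_contra! hR
  refine h ((finite_setOf_mem_norm_le L R).subset fun z hz => ⟨hz.1, hR z hz.1 ?_⟩)
  rw [← supNorm_eq_norm]
  exact hz.2

end Exponent

section ColumnLattice

variable {ι : Type*} [Fintype ι]

/-- The lattice of integer linear combinations of the columns of `B`; the set in
`IsUnimodularLattice` is its underlying set. -/
def columnLattice (B : Matrix ι ι ℝ) : Submodule ℤ (ι → ℝ) :=
  Submodule.span ℤ (Set.range B.col)

lemma mem_columnLattice {B : Matrix ι ι ℝ} {z : ι → ℝ} :
    z ∈ columnLattice B ↔ ∃ x : ι → ℤ, z = B *ᵥ fun i => (x i : ℝ) := by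
  rw [columnLattice, Submodule.mem_span_range_iff_exists_fun]
  refine exists_congr fun x => ?_
  rw [eq_comm, mulVec_eq_sum]
  congr! 2
  ext
  simp [mul_comm]

variable [DecidableEq ι]

/-- The columns of a nonsingular matrix as a basis, through which the results of `ZSpan` apply to
`columnLattice`. -/
def columnBasis (B : Matrix ι ι ℝ) (hB : B.det ≠ 0) : Module.Basis ι ℝ (ι → ℝ) :=
  basisOfLinearIndependentOfCardEqFinrank' B.col (linearIndependent_cols_of_det_ne_zero hB)
    (by simp)

lemma coe_columnBasis {B : Matrix ι ι ℝ} (hB : B.det ≠ 0) : ⇑(columnBasis B hB) = B.col :=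
  coe_basisOfLinearIndependentOfCardEqFinrank' _ _ _

lemma discreteTopology_columnLattice {B : Matrix ι ι ℝ} (hB : B.det ≠ 0) :
    DiscreteTopology (columnLattice B) := by
  rw [columnLattice, ← coe_columnBasis hB]
  infer_instance

lemma exists_ne_zero_mem_columnLattice_abs_lt {B : Matrix ι ι ℝ} (hB : B.det ≠ 0) {c : ι → ℝ}
    (hc : ∀ i, 0 < c i) (h : |B.det| < ∏ i, c i) :
    ∃ z ∈ columnLattice B, z ≠ 0 ∧ ∀ i, |z i| < c i := by
  let b := columnBasis B hB
  let s : Set (ι → ℝ) := Set.pi Set.univ fun i => Set.Ioo (-c i) (c i)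
  have hspan : Submodule.span ℤ (Set.range b) = columnLattice B := by
    rw [coe_columnBasis, columnLattice]
  have hdet : (Matrix.of b).det = B.det := by
    rw [coe_columnBasis, ← det_transpose]; rfl
  have hvol : MeasureTheory.volume s =
      ENNReal.ofReal (∏ i, c i) * 2 ^ Module.finrank ℝ (ι → ℝ) := by
    have hprod : ∏ i, (c i - -c i) = (∏ i, c i) * 2 ^ Fintype.card ι := by
      simp only [sub_neg_eq_add, ← mul_two, Finset.prod_mul_distrib, Finset.prod_const,
        Finset.card_univ]
    rw [Real.volume_pi_Ioo, ← ENNReal.ofReal_prod_of_nonneg fun i _ => by linarith [hc i], hprod,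
      ENNReal.ofReal_mul (Finset.prod_nonneg fun i _ => (hc i).le)]
    simp
  have hsymm : ∀ z ∈ s, -z ∈ s := fun z hz i hi =>
    ⟨neg_lt_neg (hz i hi).2, neg_lt.1 (hz i hi).1⟩
  have : Countable (Submodule.span ℤ (Set.range b)).toAddSubgroup :=
    inferInstanceAs (Countable (Submodule.span ℤ (Set.range b)))
  obtain ⟨z, hz0, hzs⟩ := MeasureTheory.exists_ne_zero_mem_lattice_of_measure_mul_two_pow_lt_measure
    (ZSpan.isAddFundamentalDomain' b MeasureTheory.volume) hsymm
    (convex_pi fun i _ => convex_Ioo (-c i) (c i)) (by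
      rw [ZSpan.volume_fundamentalDomain, hdet, hvol]
      gcongr
      · finiteness
      · exact (ENNReal.ofReal_lt_ofReal_iff ((abs_nonneg _).trans_lt h)).2 h)
  refine ⟨z, hspan ▸ z.2, fun h0 => hz0 (Subtype.ext h0), fun i => ?_⟩
  exact abs_lt.2 (hzs i trivial)

end ColumnLattice

section Dual

variable {d : ℕ} {B : Matrix (Fin d) (Fin d) ℝ}

lemma dualLattice_columnLattice (hB : B.det ≠ 0) :
    dualLattice d (columnLattice B) = columnLattice (B⁻¹)ᵀ := by
  have hu : IsUnit B.det := hB.isUnit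
  ext w
  rw [SetLike.mem_coe, mem_columnLattice]
  constructor
  · intro hw
    have hint (j : Fin d) : ∃ c : ℤ, (w ᵥ* B) j = c :=
      hw _ (Submodule.subset_span ⟨j, rfl⟩)
    choose x hx using hint
    refine ⟨x, ?_⟩
    rw [← funext hx, mulVec_transpose, vecMul_vecMul, mul_nonsing_inv _ hu, vecMul_one]
  · rintro ⟨y, rfl⟩ z hz
    obtain ⟨x, rfl⟩ := mem_columnLattice.1 hz
    refine ⟨y ⬝ᵥ x, ?_⟩
    change ((B⁻¹)ᵀ *ᵥ fun i => (y i : ℝ)) ⬝ᵥ (B *ᵥ fun i => (x i : ℝ)) = _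
    rw [dotProduct_mulVec, mulVec_transpose, vecMul_vecMul, nonsing_inv_mul _ hu, vecMul_one]
    simp [dotProduct]

lemma det_transpose_inv_ne_zero (hB : B.det ≠ 0) : ((B⁻¹)ᵀ).det ≠ 0 := by
  rw [det_transpose]
  exact (isUnit_nonsing_inv_det B hB.isUnit).ne_zero

lemma dualLattice_dualLattice_columnLattice (hB : B.det ≠ 0) :
    dualLattice d (dualLattice d (columnLattice B)) = columnLattice B := by
  rw [dualLattice_columnLattice hB, dualLattice_columnLattice (det_transpose_inv_ne_zero hB),
    transpose_nonsing_inv, transpose_transpose, nonsing_inv_nonsing_inv _ hB.isUnit]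

lemma exists_ne_zero_mem_dotProduct_eq_zero_abs_lt (hB : B.det ≠ 0) {w : Fin d → ℝ}
    (hw : w ∈ dualLattice d (columnLattice B)) {k : Fin d} (hk : w k ≠ 0) {c : Fin d → ℝ}
    (hc : ∀ i, 0 < c i) (h : |w k| * |B.det| < ∏ i ∈ {k}ᶜ, c i) :
    ∃ z ∈ columnLattice B, z ≠ 0 ∧ w ⬝ᵥ z = 0 ∧ ∀ i ≠ k, |z i| < c i := by
  let A := B.updateRow k (w ᵥ* B)
  have hdet : A.det = w k * B.det := by
    rw [← smul_eq_mul, ← det_updateRow_sum, ← vecMul_eq_sum]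
  have hA (x : Fin d → ℝ) : A *ᵥ x = Function.update (B *ᵥ x) k (w ⬝ᵥ B *ᵥ x) := by
    rw [updateRow_mulVec, dotProduct_mulVec]
  have hA0 : A.det ≠ 0 := hdet ▸ mul_ne_zero hk hB
  have hc1 (i : Fin d) : 0 < Function.update c k 1 i :=
    (Function.forall_update_iff _ fun _ x => 0 < x).2 ⟨one_pos, fun j _ => hc j⟩ i
  obtain ⟨y, hy, hy0, hyc⟩ := exists_ne_zero_mem_columnLattice_abs_lt hA0 hc1
    (by rw [hdet, abs_mul, Finset.prod_update_of_mem (Finset.mem_univ k), one_mul]; exact h)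
  obtain ⟨x, rfl⟩ := mem_columnLattice.1 hy
  have hz : (B *ᵥ fun i => (x i : ℝ)) ∈ columnLattice B := mem_columnLattice.2 ⟨x, rfl⟩
  simp only [hA] at hy0 hyc
  refine ⟨_, hz, fun h0 => hy0 (by simp [h0]), ?_, fun i hi => by simpa [hi] using hyc i⟩
  obtain ⟨m, hm⟩ : ∃ m : ℤ, (w ⬝ᵥ B *ᵥ fun i => (x i : ℝ)) = m := hw _ hz
  have hm1 : |m| < 1 := by
    have := hyc k
    rw [Function.update_self, Function.update_self, hm] at this
    exact_mod_cast this
  rw [hm, Int.abs_lt_one_iff.1 hm1, Int.cast_zero]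

end Dual

section Transference

lemma exists_prod_eq_of_prod_le {ι : Type*} [Fintype ι] {a : ι → ℝ} {M P : ℝ} (ha : ∀ i, 0 ≤ a i)
    (hM : 0 ≤ M) (haM : ∀ i, a i ≤ M) (hP : 0 < P) (haP : ∏ i, a i ≤ P)
    (hPM : P ≤ M ^ Fintype.card ι) :
    ∃ l : ι → ℝ, (∀ i, 0 < l i) ∧ (∀ i, a i ≤ l i) ∧ (∀ i, l i ≤ M) ∧ ∏ i, l i = P := by
  have hcont : ContinuousOn (fun t : ℝ => ∏ i, max (a i) t) (Set.Icc 0 M) := by fun_prop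
  have hmem : P ∈ Set.Icc (∏ i, max (a i) 0) (∏ i, max (a i) M) := by
    simpa [max_eq_left (ha _), max_eq_right (haM _)] using ⟨haP, hPM⟩
  obtain ⟨t, ht, rfl⟩ := intermediate_value_Icc hM hcont hmem
  have hne (i : ι) : max (a i) t ≠ 0 := Finset.prod_ne_zero_iff.1 hP.ne' i (Finset.mem_univ i)
  exact ⟨fun i => max (a i) t, fun i => (le_max_of_le_left (ha i)).lt_of_ne' (hne i),
    fun i => le_max_left _ _, fun i => max_le (haM i) ht.2, rfl⟩

lemma prod_le_mul_pow_of_forall_le {ι : Type*} [Fintype ι] {l : ι → ℝ} {M : ℝ} (hl : ∀ i, 0 ≤ l i)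
    (hlM : ∀ i, l i ≤ M) (i : ι) : ∏ j, l j ≤ l i * M ^ (Fintype.card ι - 1) := by
  classical
  rw [Fintype.prod_eq_mul_prod_compl i, ← Finset.card_singleton i, ← Finset.card_compl,
    ← Finset.prod_const]
  exact mul_le_mul_of_nonneg_left
    (Finset.prod_le_prod (fun j _ => hl j) fun j _ => hlM j) (hl i)

lemma abs_mul_le_of_dotProduct_eq_zero {ι : Type*} [Fintype ι] {w z : ι → ℝ}
    (h : w ⬝ᵥ z = 0) {s : ℝ} (hs : 0 ≤ s) (k : ι) (hwz : ∀ i ≠ k, |w i * z i| ≤ s) :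
    |w k * z k| ≤ Fintype.card ι * s := by
  classical
  have hk : w k * z k = -∑ i ∈ {k}ᶜ, w i * z i := by
    rwa [dotProduct, Fintype.sum_eq_add_sum_compl k, ← eq_neg_iff_add_eq_zero] at h
  calc |w k * z k| ≤ ∑ i ∈ {k}ᶜ, |w i * z i| := by
        rw [hk, abs_neg]; exact Finset.abs_sum_le_sum_abs _ _
    _ ≤ ∑ _i ∈ ({k}ᶜ : Finset ι), s := Finset.sum_le_sum fun i hi => hwz i (by simpa using hi)
    _ ≤ ∑ _i : ι, s := Finset.sum_le_univ_sum_of_nonneg fun _ => hs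
    _ = Fintype.card ι * s := by simp

variable {d : ℕ} {B : Matrix (Fin d) (Fin d) ℝ}

lemma exists_ne_zero_mem_abs_le_div_of_abs_le (hB : B.det ≠ 0) {w l : Fin d → ℝ}
    (hw : w ∈ dualLattice d (columnLattice B)) (hl : ∀ i, 0 < l i) (hwl : ∀ i, |w i| ≤ l i)
    {k : Fin d} (hk : |w k| = l k) {s : ℝ} (hs : 0 < s) (h : |B.det| * ∏ i, l i < s ^ (d - 1)) :
    ∃ z ∈ columnLattice B, z ≠ 0 ∧ ∀ i, |z i| ≤ d * s / l i := by
  have hd : (1 : ℝ) ≤ d := by exact_mod_cast k.pos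
  have hprod : |w k| * |B.det| < ∏ i ∈ {k}ᶜ, s / l i := by
    have hpos : 0 < ∏ i ∈ {k}ᶜ, l i := Finset.prod_pos fun i _ => hl i
    rw [Finset.prod_div_distrib, Finset.prod_const, Finset.card_compl, Finset.card_singleton,
      Fintype.card_fin, lt_div_iff₀ hpos, hk]
    rw [Fintype.prod_eq_mul_prod_compl k] at h
    linarith
  obtain ⟨z, hz, hz0, hwz, hzl⟩ := exists_ne_zero_mem_dotProduct_eq_zero_abs_lt hB hw
    (abs_pos.1 (hk ▸ hl k)) (fun i => div_pos hs (hl i)) hprod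
  refine ⟨z, hz, hz0, fun i => (le_div_iff₀' (hl i)).2 ?_⟩
  have hlz (i : Fin d) (hi : i ≠ k) : l i * |z i| ≤ s := ((lt_div_iff₀' (hl i)).1 (hzl i hi)).le
  rcases eq_or_ne i k with rfl | hi
  · rw [← hk, ← abs_mul, ← Fintype.card_fin d]
    refine abs_mul_le_of_dotProduct_eq_zero hwz hs.le i fun j hj => ?_
    rw [abs_mul]
    exact (mul_le_mul_of_nonneg_right (hwl j) (abs_nonneg _)).trans (hlz j hj)
  · exact (hlz i hi).trans (le_mul_of_one_le_left hs.le hd)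

lemma exists_ne_zero_mem_columnLattice_of_piProd_le (hB : B.det ≠ 0) {w : Fin d → ℝ}
    (hw : w ∈ dualLattice d (columnLattice B)) (hw1 : 1 ≤ ‖w‖) {p : ℝ} (hp : 0 < p) (hp1 : p ≤ 1)
    (hwp : PiProd d w ≤ p) {s : ℝ} (hs : 0 < s) (h : |B.det| * p ^ d < s ^ (d - 1)) :
    ∃ z ∈ columnLattice B, z ≠ 0 ∧ (∃ i, |z i| ≤ d * s / ‖w‖) ∧
      ‖z‖ ≤ d * s * ‖w‖ ^ (d - 1) / p ^ d ∧ PiProd d z ≤ d * s / p := by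
  have hne : Nonempty (Fin d) := by
    by_contra! hempty
    norm_num [Subsingleton.elim w 0] at hw1
  have hd : d ≠ 0 := hne.some.pos.ne'
  obtain ⟨k, hk⟩ := exists_eq_ciSup_of_finite (f := fun i => |w i|)
  replace hk : |w k| = ‖w‖ := hk.trans (supNorm_eq_norm w)
  obtain ⟨l, hl, hwl, hlw, hlp⟩ := exists_prod_eq_of_prod_le (fun i => abs_nonneg (w i))
    (norm_nonneg w) (norm_le_pi_norm w) (pow_pos hp d) ((piProd_le_iff hd hp.le w).1 hwp)
    ((pow_le_one₀ hp.le hp1).trans (one_le_pow₀ hw1))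
  have hlk : l k = ‖w‖ := (hlw k).antisymm (hk ▸ hwl k)
  obtain ⟨z, hz, hz0, hzl⟩ :=
    exists_ne_zero_mem_abs_le_div_of_abs_le hB hw hl hwl (hk.trans hlk.symm) hs (hlp ▸ h)
  refine ⟨z, hz, hz0, ⟨k, hlk ▸ hzl k⟩, ?_, (piProd_le_iff hd (by positivity) z).2 ?_⟩
  · refine (pi_norm_le_iff_of_nonneg (by positivity)).2 fun i => (hzl i).trans ?_
    have hpl := prod_le_mul_pow_of_forall_le (fun i => (hl i).le) hlw i
    rw [hlp, Fintype.card_fin] at hpl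
    rw [div_le_div_iff₀ (hl i) (by positivity), mul_assoc (d * s : ℝ), mul_comm (‖w‖ ^ _)]
    gcongr
  · calc ∏ i, |z i| ≤ ∏ i, d * s / l i :=
          Finset.prod_le_prod (fun i _ => abs_nonneg _) fun i _ => hzl i
      _ = (d * s / p) ^ d := by
          rw [Finset.prod_div_distrib, hlp, Finset.prod_const, Finset.card_fin, div_pow]

lemma exists_ne_zero_mem_columnLattice_of_piProd_le_rpow (hd : 2 ≤ d) (hB : B.det ≠ 0) {γ : ℝ}
    (hγ : 0 ≤ γ) :
    ∃ C > 0, ∀ w ∈ dualLattice d (columnLattice B), 1 ≤ ‖w‖ → PiProd d w ≤ ‖w‖ ^ (-γ) →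
      ∃ z ∈ columnLattice B, z ≠ 0 ∧ (∃ i, |z i| ≤ C / ‖w‖) ∧
        ‖z‖ ≤ C * ‖w‖ ^ ((((d : ℝ) - 1) ^ 2 * (1 + γ) - γ) / (d - 1)) ∧
        PiProd d z ≤ C * ‖w‖ ^ (-(γ / (d - 1))) := by
  have hd1 : (0 : ℝ) < d - 1 := by
    have : (2 : ℝ) ≤ d := by exact_mod_cast hd
    linarith
  have hcast : ((d - 1 : ℕ) : ℝ) = d - 1 := Nat.cast_pred (by lia)
  set c : ℝ := (2 * |B.det|) ^ ((d - 1 : ℕ) : ℝ)⁻¹ with hc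
  have hc0 : 0 < c := by positivity
  refine ⟨d * c, by positivity, fun w hw hw1 hwγ => ?_⟩
  have hw0 : 0 < ‖w‖ := one_pos.trans_le hw1
  set s : ℝ := c * ‖w‖ ^ (-(γ * d / (d - 1))) with hs
  have hspow : s ^ (d - 1) = 2 * |B.det| * (‖w‖ ^ (-γ)) ^ d := by
    rw [hs, mul_pow, hc, Real.rpow_inv_natCast_pow (by positivity) (by lia),
      ← Real.rpow_mul_natCast hw0.le, ← Real.rpow_mul_natCast hw0.le, hcast]
    congr 2
    field_simp
  have hlt : |B.det| * (‖w‖ ^ (-γ)) ^ d < s ^ (d - 1) := by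
    rw [hspow, mul_assoc]
    exact lt_mul_of_one_lt_left (by positivity) one_lt_two
  obtain ⟨z, hz, hz0, ⟨i, hi⟩, hznorm, hzPi⟩ := exists_ne_zero_mem_columnLattice_of_piProd_le hB
    hw hw1 (Real.rpow_pos_of_pos hw0 (-γ))
    (Real.rpow_le_one_of_one_le_of_nonpos hw1 (neg_nonpos.2 hγ)) hwγ (by positivity) hlt
  refine ⟨z, hz, hz0, ⟨i, hi.trans ?_⟩, hznorm.trans_eq ?_, hzPi.trans_eq ?_⟩
  · have hsc : s ≤ c := mul_le_of_le_one_right hc0.le <|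
      Real.rpow_le_one_of_one_le_of_nonpos hw1 (neg_nonpos.2 (by positivity))
    gcongr
  · have hexp : (((d : ℝ) - 1) ^ 2 * (1 + γ) - γ) / (d - 1) =
        -(γ * d / (d - 1)) + (d - 1 : ℕ) - -γ * d := by
      rw [hcast]; field_simp; ring
    rw [hexp, Real.rpow_sub hw0, Real.rpow_add hw0, Real.rpow_natCast, Real.rpow_mul_natCast hw0.le]
    ring
  · have hexp : -(γ / ((d : ℝ) - 1)) = -(γ * d / (d - 1)) - -γ := by field_simp; ring
    rw [hexp, Real.rpow_sub hw0]
    ring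

end Transference

section TransferExponent

/-- The lower bound for `ω(Λ)` that the transference theorem yields from `ω(Λ*) ≥ γ` in
dimension `d`; the denominator is positive for `2 ≤ d` and `0 < γ`. -/
def transferExponent (d : ℕ) (γ : ℝ) : ℝ := γ / (((d : ℝ) - 1) ^ 2 * (1 + γ) - γ)

variable {d : ℕ}

lemma transferExponent_denom_pos (hd : 2 ≤ d) {γ : ℝ} (hγ : 0 < γ) :
    0 < ((d : ℝ) - 1) ^ 2 * (1 + γ) - γ := by
  have hd2 : (2 : ℝ) ≤ d := by exact_mod_cast hd
  have hsq : (1 : ℝ) ≤ ((d : ℝ) - 1) ^ 2 := one_le_pow₀ (by linarith)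
  nlinarith

lemma transferExponent_pos (hd : 2 ≤ d) {γ : ℝ} (hγ : 0 < γ) : 0 < transferExponent d γ :=
  div_pos hγ (transferExponent_denom_pos hd hγ)

lemma one_add_inv_transferExponent {γ : ℝ} (hγ : γ ≠ 0) :
    1 + (transferExponent d γ)⁻¹ = ((d : ℝ) - 1) ^ 2 * (1 + γ⁻¹) := by
  rw [transferExponent, inv_div]
  field_simp
  ring

lemma monotoneOn_transferExponent (hd : 2 ≤ d) :
    MonotoneOn (transferExponent d) (Set.Ioi 0) := by
  intro a (ha : 0 < a) b (hb : 0 < b) hab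
  rw [← inv_le_inv₀ (transferExponent_pos hd hb) (transferExponent_pos hd ha),
    ← add_le_add_iff_left 1, one_add_inv_transferExponent ha.ne',
    one_add_inv_transferExponent hb.ne']
  gcongr

lemma continuousAt_transferExponent (hd : 2 ≤ d) {γ : ℝ} (hγ : 0 < γ) :
    ContinuousAt (transferExponent d) γ :=
  continuousAt_id.div (by fun_prop) (transferExponent_denom_pos hd hγ).ne'

end TransferExponent

section Main

variable {d : ℕ} {B : Matrix (Fin d) (Fin d) ℝ}

lemma omegaLat_columnLattice_nonneg (hd : 2 ≤ d) (hB : B.det ≠ 0) :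
    0 ≤ omegaLat d (columnLattice B) := by
  have := discreteTopology_columnLattice hB
  have hdet : 0 < |B.det| := abs_pos.2 hB
  let k : Fin d := ⟨0, by lia⟩
  refine le_omegaLat_of_forall_exists_abs_lt (γ := 0) ((2 * |B.det|) ^ (d : ℝ)⁻¹) fun ε hε => ?_
  set N : ℝ := (2 * |B.det| / ε) ^ ((d - 1 : ℕ) : ℝ)⁻¹ with hN
  have hN0 : 0 < N := by positivity
  have hprod : ∏ i, Function.update (fun _ => N) k ε i = 2 * |B.det| := by
    rw [Finset.prod_update_of_mem (Finset.mem_univ k), Finset.prod_const,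
      ← Finset.compl_eq_univ_sdiff, Finset.card_compl, Finset.card_singleton, Fintype.card_fin, hN,
      Real.rpow_inv_natCast_pow (by positivity) (by lia), mul_div_cancel₀ _ hε.ne']
  have hpos (i : Fin d) : 0 < Function.update (fun _ => N) k ε i :=
    (Function.forall_update_iff _ fun _ x => 0 < x).2 ⟨hε, fun _ _ => hN0⟩ i
  obtain ⟨z, hz, hz0, hzc⟩ :=
    exists_ne_zero_mem_columnLattice_abs_lt hB hpos (by rw [hprod]; linarith)
  refine ⟨z, hz, hz0, ⟨k, by simpa using hzc k⟩, ?_⟩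
  rw [neg_zero, Real.rpow_zero, mul_one, piProd_le_iff (by lia) (by positivity),
    Real.rpow_inv_natCast_pow (by positivity) (by lia), ← hprod]
  exact Finset.prod_le_prod (fun i _ => abs_nonneg _) fun i _ => (hzc i).le

lemma transferExponent_le_omegaLat_of_infinite (hd : 2 ≤ d) (hB : B.det ≠ 0) {γ : ℝ} (hγ : 0 < γ)
    (h : {w ∈ dualLattice d (columnLattice B) | PiProd d w ≤ supNorm w ^ (-γ)}.Infinite) :
    (transferExponent d γ : EReal) ≤ omegaLat d (columnLattice B) := by
  have := discreteTopology_columnLattice hB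
  have := discreteTopology_columnLattice (det_transpose_inv_ne_zero hB)
  obtain ⟨C, hC, htransfer⟩ := exists_ne_zero_mem_columnLattice_of_piProd_le_rpow hd hB hγ.le
  rw [dualLattice_columnLattice hB] at h htransfer
  set δ := transferExponent d γ with hδ
  set E : ℝ := (((d : ℝ) - 1) ^ 2 * (1 + γ) - γ) / (d - 1) with hE
  have hEδ : γ / (d - 1) = E * δ := by
    rw [hE, hδ, transferExponent, div_mul_div_comm, mul_comm, mul_div_mul_right]
    exact (transferExponent_denom_pos hd hγ).ne'
  refine le_omegaLat_of_forall_exists_abs_lt (C * C ^ δ) fun ε hε => ?_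
  obtain ⟨w, hw, hwγ, hwR⟩ := exists_mem_piProd_le_lt_norm_of_infinite h (max 1 (C / ε))
  obtain ⟨hw1, hwε⟩ := max_lt_iff.1 hwR
  have hw0 : 0 < ‖w‖ := one_pos.trans hw1
  obtain ⟨z, hz, hz0, ⟨i, hi⟩, hzE, hzPi⟩ := htransfer w hw hw1.le hwγ
  refine ⟨z, hz, hz0, ⟨i, hi.trans_lt (div_lt_comm₀ hε hw0 |>.1 hwε)⟩, hzPi.trans ?_⟩
  rw [mul_assoc]
  gcongr
  calc ‖w‖ ^ (-(γ / (d - 1))) = (‖w‖ ^ E) ^ (-δ) := by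
        rw [hEδ, ← mul_neg, Real.rpow_mul hw0.le]
    _ = C ^ δ * (C * ‖w‖ ^ E) ^ (-δ) := by
        rw [Real.mul_rpow hC.le (by positivity), Real.rpow_neg hC.le,
          mul_inv_cancel_left₀ (by positivity)]
    _ ≤ C ^ δ * ‖z‖ ^ (-δ) :=
        mul_le_mul_of_nonneg_left (Real.rpow_le_rpow_of_nonpos (norm_pos_iff.2 hz0) hzE
          (neg_nonpos.2 (transferExponent_pos hd hγ).le)) (by positivity)

lemma transferExponent_le_omegaLat (hd : 2 ≤ d) (hB : B.det ≠ 0) {γ : ℝ} (hγ : 0 < γ)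
    (h : (γ : EReal) ≤ omegaLat d (dualLattice d (columnLattice B))) :
    (transferExponent d γ : EReal) ≤ omegaLat d (columnLattice B) := by
  refine EReal.ge_of_forall_gt_iff_ge.1 fun y hy => ?_
  obtain ⟨x, hyx, hx0, hxγ⟩ : ∃ x, y < transferExponent d x ∧ 0 < x ∧ x < γ := by
    have hev : ∀ᶠ x in 𝓝 γ, y < transferExponent d x ∧ 0 < x :=
      ((continuousAt_transferExponent hd hγ).eventually_const_lt (EReal.coe_lt_coe_iff.1 hy)).and
        (lt_mem_nhds hγ)
    obtain ⟨x, ⟨hyx, hx0⟩, hxγ⟩ := ((eventually_nhdsWithin_of_eventually_nhds hev).and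
      (self_mem_nhdsWithin (s := Set.Iio γ))).exists
    exact ⟨x, hyx, hx0, hxγ⟩
  obtain ⟨_, ⟨g, hg, rfl⟩, hxg⟩ := lt_sSup_iff.1 ((EReal.coe_lt_coe_iff.2 hxγ).trans_le h)
  replace hxg : x < g := EReal.coe_lt_coe_iff.1 hxg
  have hg0 : 0 < g := hx0.trans hxg
  calc (y : EReal) ≤ transferExponent d g := EReal.coe_le_coe_iff.2 <|
        hyx.le.trans (monotoneOn_transferExponent hd hx0 hg0 hxg.le)
    _ ≤ omegaLat d (columnLattice B) := transferExponent_le_omegaLat_of_infinite hd hB hg0 hg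

lemma omegaLat_dualLattice_nonneg (hd : 2 ≤ d) (hB : B.det ≠ 0) :
    0 ≤ omegaLat d (dualLattice d (columnLattice B)) := by
  rw [dualLattice_columnLattice hB]
  exact omegaLat_columnLattice_nonneg hd (det_transpose_inv_ne_zero hB)

lemma omegaLat_dualLattice_eq_zero (hd : 2 ≤ d) (hB : B.det ≠ 0)
    (h : omegaLat d (columnLattice B) = 0) :
    omegaLat d (dualLattice d (columnLattice B)) = 0 := by
  refine le_antisymm (le_of_not_gt fun hpos => ?_) (omegaLat_dualLattice_nonneg hd hB)
  obtain ⟨γ, hγ0, hγ⟩ := EReal.lt_iff_exists_real_btwn.1 hpos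
  replace hγ0 : 0 < γ := EReal.coe_pos.1 hγ0
  have hle := transferExponent_le_omegaLat hd hB hγ0 hγ.le
  rw [h] at hle
  exact (transferExponent_pos hd hγ0).not_ge (EReal.coe_nonpos.1 hle)

lemma omegaLat_dualLattice_eq_zero_iff (hd : 2 ≤ d) (hB : B.det ≠ 0) :
    omegaLat d (dualLattice d (columnLattice B)) = 0 ↔ omegaLat d (columnLattice B) = 0 := by
  refine ⟨fun h => ?_, omegaLat_dualLattice_eq_zero hd hB⟩
  rw [← dualLattice_dualLattice_columnLattice hB, dualLattice_columnLattice hB]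
  rw [dualLattice_columnLattice hB] at h
  exact omegaLat_dualLattice_eq_zero hd (det_transpose_inv_ne_zero hB) h

lemma one_add_inv_omegaLat_le (hd : 2 ≤ d) (hB : B.det ≠ 0) {a b : ℝ}
    (ha : omegaLat d (columnLattice B) = a)
    (hb : omegaLat d (dualLattice d (columnLattice B)) = b) (hb0 : b ≠ 0) :
    1 + a⁻¹ ≤ ((d : ℝ) - 1) ^ 2 * (1 + b⁻¹) := by
  have hbpos : 0 < b :=
    (EReal.coe_nonneg.1 (hb ▸ omegaLat_dualLattice_nonneg hd hB)).lt_of_ne' hb0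
  have hle : transferExponent d b ≤ a :=
    EReal.coe_le_coe_iff.1 (ha ▸ transferExponent_le_omegaLat hd hB hbpos hb.ge)
  rw [← one_add_inv_transferExponent hb0]
  gcongr
  exact transferExponent_pos hd hbpos

end Main

theorem stmt1_general {d : ℕ} (hd : 2 ≤ d) {B : Matrix (Fin d) (Fin d) ℝ} (hB : B.det ≠ 0) :
    (omegaLat d (columnLattice B) = 0 ↔
      omegaLat d (dualLattice d (columnLattice B)) = 0) ∧
    (∀ γ : ℝ, 0 < γ → (γ : EReal) ≤ omegaLat d (dualLattice d (columnLattice B)) →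
      ((γ / (((d : ℝ) - 1) ^ 2 * (1 + γ) - γ) : ℝ) : EReal) ≤ omegaLat d (columnLattice B)) ∧
    (∀ a b : ℝ, omegaLat d (columnLattice B) = (a : EReal) →
      omegaLat d (dualLattice d (columnLattice B)) = (b : EReal) →
      b ≠ 0 → 1 + a⁻¹ ≤ ((d : ℝ) - 1) ^ 2 * (1 + b⁻¹)) :=
  ⟨(omegaLat_dualLattice_eq_zero_iff hd hB).symm,
    fun _ hγ h => transferExponent_le_omegaLat hd hB hγ h,
    fun _ _ ha hb hb0 => one_add_inv_omegaLat_le hd hB ha hb hb0⟩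

theorem stmt1 (d : ℕ) (hd : 2 ≤ d) (Λ : Set (Fin d → ℝ))
    (hΛ : IsUnimodularLattice d Λ) :
    (omegaLat d Λ = 0 ↔ omegaLat d (dualLattice d Λ) = 0) ∧
    (∀ γ : ℝ, 0 < γ → (γ : EReal) ≤ omegaLat d (dualLattice d Λ) →
      ((γ / (((d : ℝ) - 1) ^ 2 * (1 + γ) - γ) : ℝ) : EReal) ≤ omegaLat d Λ) ∧
    (∀ a b : ℝ, omegaLat d Λ = (a : EReal) → omegaLat d (dualLattice d Λ) = (b : EReal) →
      a ≠ 0 → b ≠ 0 → 1 + a⁻¹ ≤ ((d : ℝ) - 1) ^ 2 * (1 + b⁻¹)) := by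
  obtain ⟨B, hB, rfl⟩ := hΛ
  have hcol : {v | ∃ x : Fin d → ℤ, v = B.mulVec fun i => (x i : ℝ)} = columnLattice B :=
    Set.ext fun _ => mem_columnLattice.symm
  obtain ⟨hzero, htransfer, hinv⟩ := stmt1_general hd (abs_pos.1 (hB ▸ one_pos))
  rw [hcol]
  exact ⟨hzero, htransfer, fun a b ha hb _ => hinv a b ha hb⟩
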